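/- Let A be an n×n real positive-semidefinite matrix, let r ≥ 1, and fix ε > 0. Suppose the sketch size satisfies k = (1 + 1/ε)·r + 1 (with r < k ≤ n). Let Ω be an n×k random matrix with independent standard normal entries, define the Nyström approximation Â = AΩ((Ω*AΩ)†)Ω*A, and let Â_r = ⟦Â⟧_r. Then E‖A − Â_r‖₁ ≤ (1 + ε) · ‖A − ⟦A⟧_r‖₁. -/

import Mathlib

open Matrix MeasureTheory ProbabilityTheory
open scoped ENNReal NNReal ComplexOrder Classical

namespace PsdSketch

variable {𝕜 : Type*} [RCLike 𝕜]

/-- The four Penrose conditions characterizing the Moore–Penrose pseudoinverse. -/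
def IsMoorePenrose {m k : ℕ} (M : Matrix (Fin m) (Fin k) 𝕜)
    (X : Matrix (Fin k) (Fin m) 𝕜) : Prop :=
  M * X * M = M ∧ X * M * X = X ∧ (M * X)ᴴ = M * X ∧ (X * M)ᴴ = X * M

/-- The Moore–Penrose pseudoinverse `M†` (the unique matrix satisfying the
Penrose conditions). -/
noncomputable def pinv {m k : ℕ} (M : Matrix (Fin m) (Fin k) 𝕜) :
    Matrix (Fin k) (Fin m) 𝕜 :=
  if h : ∃ X, IsMoorePenrose M X then h.choose else 0

/-- The Nyström approximation `Â = A Ω ((Ω* A Ω)†) Ω* A`. -/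
noncomputable def nystrom {n k : ℕ} (A : Matrix (Fin n) (Fin n) 𝕜)
    (Ω : Matrix (Fin n) (Fin k) 𝕜) : Matrix (Fin n) (Fin n) 𝕜 :=
  A * Ω * pinv (Ωᴴ * A * Ω) * Ωᴴ * A

/-- The `i`-th singular value of a square matrix, 0-indexed and listed in weakly
decreasing order (so `sval M 0 = σ₁(M)`), with `sval M i = 0` for `i ≥ n`. -/
noncomputable def sval {n : ℕ} (M : Matrix (Fin n) (Fin n) 𝕜) (i : ℕ) : ℝ :=
  if h : i < n then
    Real.sqrt
      ((Matrix.posSemidef_conjTranspose_mul_self M).1.eigenvalues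
        (Tuple.sort (Matrix.posSemidef_conjTranspose_mul_self M).1.eigenvalues
          (Fin.rev ⟨i, h⟩)))
  else 0

/-- The Schatten `p`-norm: the `ℓ_p` norm of the vector of singular values. -/
noncomputable def schatten {n : ℕ} (p : ℝ≥0∞) (M : Matrix (Fin n) (Fin n) 𝕜) : ℝ :=
  if p = ∞ then sval M 0
  else (∑ i ∈ Finset.range n, sval M i ^ p.toReal) ^ (1 / p.toReal)

/-- `σ_{r+1}^{(p)}(M)`, the optimal rank-`r` approximation error of `M` in the
Schatten `p`-norm: `(Σ_{i > r} σ_i(M)^p)^{1/p}` (for `p = ∞`, `σ_{r+1}(M)`). -/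
noncomputable def tailNorm {n : ℕ} (p : ℝ≥0∞) (M : Matrix (Fin n) (Fin n) 𝕜)
    (r : ℕ) : ℝ :=
  if p = ∞ then sval M r
  else (∑ i ∈ Finset.Ico r n, sval M i ^ p.toReal) ^ (1 / p.toReal)

/-- `B` is a (simultaneous) best rank-`r` approximation of `M` with respect to every
Schatten `p`-norm; this is the defining property of an `r`-truncated SVD `⟦M⟧_r`. -/
def IsBestRankApprox {n : ℕ} (M B : Matrix (Fin n) (Fin n) 𝕜) (r : ℕ) : Prop :=
  B.rank ≤ r ∧
    ∀ p : ℝ≥0∞, 1 ≤ p → ∀ C : Matrix (Fin n) (Fin n) 𝕜, C.rank ≤ r →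
      schatten p (M - B) ≤ schatten p (M - C)

/-- `⟦M⟧_r`: a best rank-`r` approximation of `M` (an `r`-truncated SVD). -/
noncomputable def truncate {n : ℕ} (M : Matrix (Fin n) (Fin n) 𝕜) (r : ℕ) :
    Matrix (Fin n) (Fin n) 𝕜 :=
  if h : ∃ B, IsBestRankApprox M B r then h.choose else 0

/-- The distribution of an `n × k` random matrix with independent standard normal
entries (matrices identified with functions `Fin n → Fin k → ℝ`). -/
noncomputable def gaussianEnsemble (n k : ℕ) : Measure (Fin n → Fin k → ℝ) :=
  Measure.pi fun _ => Measure.pi fun _ => gaussianReal 0 1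

/-!
Write `A = Sᴴ * S`. The Nyström approximation is `Sᴴ * P * S`, where `P` is the orthogonal
projection onto the range of `S * Ω`, so the trace-norm error of its rank-`r` truncation is at most
`‖S - S * Ω * X‖²` in the Frobenius norm, for every `X` of rank at most `r`.

By rotation invariance the rows `a i` of `Ω` in an eigenbasis of `A` are again independent standard
Gaussian vectors. Let `g j` be the vectors biorthogonal to the `r` rows `a j` belonging to the
largest eigenvalues and take `X = ∑ j, g j * (b j)ᵀ`, with `b j` the eigenvectors. Then the
corresponding `r` rows of `S - S * Ω * X` vanish, and the others contribute
`∑ i, σ i * (1 + ∑ j, ⟪g j, a i⟫²)` to its squared norm. Averaging over these `a i` replaces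
`⟪g j, a i⟫²` by `‖g j‖²`, the inverse squared distance of one Gaussian vector of `ℝᵏ` from the span
of `r - 1` others. That distance is the norm of a standard Gaussian vector in dimension `k - r + 1`,
whose inverse square has mean `1 / (k - r - 1)`, so the expected error is at most
`1 + r / (k - r - 1)` times the tail `∑ i, σ i`.

The error is an infimum of continuous functions of `Ω`, hence upper semicontinuous, which gives its
measurability although the truncation is an arbitrary choice of best approximation.
-/

section CoordinateSubspaces

variable {E ι : Type*} [NormedAddCommGroup E] [InnerProductSpace 𝕜 E]

lemma mem_orthogonal_span_image {v : ι → E} {s : Set ι} {x : E} :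
    x ∈ (Submodule.span 𝕜 (v '' s))ᗮ ↔ ∀ i ∈ s, inner 𝕜 (v i) x = 0 := by
  rw [← Submodule.span_singleton_le_iff_mem, ← Submodule.isOrtho_iff_le, Submodule.isOrtho_comm,
    Submodule.isOrtho_span]
  simp

lemma finrank_span_image_le_card (v : ι → E) (s : Finset ι) :
    Module.finrank 𝕜 (Submodule.span 𝕜 (v '' s)) ≤ s.card := by
  rw [← Finset.coe_image]
  exact (finrank_span_finset_le_card _).trans Finset.card_image_le

lemma finrank_le_finrank_orthogonal_span_image_add_card [FiniteDimensional 𝕜 E]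
    (v : ι → E) (s : Finset ι) : Module.finrank 𝕜 E ≤
      Module.finrank 𝕜 (Submodule.span 𝕜 (v '' s))ᗮ + s.card := by
  have := finrank_span_image_le_card (𝕜 := 𝕜) v s
  have := (Submodule.span 𝕜 (v '' s)).finrank_add_finrank_orthogonal
  omega

lemma exists_mem_inf_ne_zero [FiniteDimensional 𝕜 E] {V W : Submodule 𝕜 E}
    (h : Module.finrank 𝕜 E < Module.finrank 𝕜 V + Module.finrank 𝕜 W) :
    ∃ x ∈ V, x ∈ W ∧ x ≠ 0 := by
  have hVW : ¬ Disjoint V W := fun hd =>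
    h.not_ge (Submodule.finrank_add_finrank_le_of_disjoint hd)
  obtain ⟨x, hx, hx0⟩ := (Submodule.ne_bot_iff _).mp (mt disjoint_iff.mpr hVW)
  exact ⟨x, hx.1, hx.2, hx0⟩

end CoordinateSubspaces

section SingularValues

variable {n r : ℕ}

lemma sval_nonneg (M : Matrix (Fin n) (Fin n) 𝕜) (i : ℕ) : 0 ≤ sval M i := by
  unfold sval
  split_ifs
  exacts [Real.sqrt_nonneg _, le_rfl]

lemma sval_eq_zero (M : Matrix (Fin n) (Fin n) 𝕜) {i : ℕ} (hi : n ≤ i) : sval M i = 0 :=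
  dif_neg hi.not_gt

lemma sval_antitone (M : Matrix (Fin n) (Fin n) 𝕜) : Antitone (sval M) := by
  intro i j hij
  rcases lt_or_ge j n with hj | hj
  · simp only [sval, hj, hij.trans_lt hj, dif_pos]
    exact Real.sqrt_le_sqrt
      (Tuple.monotone_sort (posSemidef_conjTranspose_mul_self M).1.eigenvalues
        (Fin.rev_le_rev.mpr hij))
  · exact (sval_eq_zero M hj).trans_le (sval_nonneg M i)

lemma exists_orthonormalBasis_conjTranspose_mul_self_apply (M : Matrix (Fin n) (Fin n) 𝕜) :
    ∃ b : OrthonormalBasis (Fin n) 𝕜 (EuclideanSpace 𝕜 (Fin n)), ∀ i,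
      toEuclideanLin (Mᴴ * M) (b i) = ((sval M i ^ 2 : ℝ) : 𝕜) • b i := by
  have hM := posSemidef_conjTranspose_mul_self M
  let e : Equiv.Perm (Fin n) := Fin.revPerm.trans (Tuple.sort hM.1.eigenvalues)
  refine ⟨hM.1.eigenvectorBasis.reindex e.symm, fun i => ?_⟩
  have hsval : sval M i ^ 2 = hM.1.eigenvalues (e i) := by
    simp only [sval, i.2, dif_pos, Fin.eta]
    exact Real.sq_sqrt (hM.eigenvalues_nonneg _)
  ext j
  rw [hsval, OrthonormalBasis.reindex_apply, Equiv.symm_symm, toLpLin_apply,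
    hM.1.mulVec_eigenvectorBasis, RCLike.real_smul_eq_coe_smul (K := 𝕜)]
  rfl

lemma norm_sq_toEuclideanLin_apply {M : Matrix (Fin n) (Fin n) 𝕜} {d : Fin n → ℝ}
    {b : OrthonormalBasis (Fin n) 𝕜 (EuclideanSpace 𝕜 (Fin n))}
    (hb : ∀ i, toEuclideanLin (Mᴴ * M) (b i) = (d i : 𝕜) • b i)
    (x : EuclideanSpace 𝕜 (Fin n)) :
    ‖toEuclideanLin M x‖ ^ 2 = ∑ i, d i * ‖inner 𝕜 (b i) x‖ ^ 2 := by
  have hadj (y : EuclideanSpace 𝕜 (Fin n)) : inner 𝕜 y (toEuclideanLin (Mᴴ * M) x) =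
      inner 𝕜 (toEuclideanLin (Mᴴ * M) y) x := by
    rw [← LinearMap.adjoint_inner_left, ← toEuclideanLin_conjTranspose_eq_adjoint,
      conjTranspose_mul, conjTranspose_conjTranspose]
  have hself : ((‖toEuclideanLin M x‖ ^ 2 : ℝ) : 𝕜) =
      inner 𝕜 x (toEuclideanLin (Mᴴ * M) x) := by
    rw [RCLike.ofReal_pow, ← inner_self_eq_norm_sq_to_K, ← LinearMap.adjoint_inner_right,
      ← toEuclideanLin_conjTranspose_eq_adjoint]
    simp only [toLpLin_apply, mulVec_mulVec]
  rw [← RCLike.ofReal_inj (K := 𝕜), hself, ← b.sum_inner_mul_inner]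
  push_cast
  refine Finset.sum_congr rfl fun i _ => ?_
  rw [hadj, hb, inner_smul_left, RCLike.conj_ofReal, mul_left_comm, ← inner_conj_symm,
    RCLike.conj_mul]

lemma sval_le_of_finrank_le {M : Matrix (Fin n) (Fin n) 𝕜} {i : ℕ} {s : ℝ} (hs : 0 ≤ s)
    (V : Submodule 𝕜 (EuclideanSpace 𝕜 (Fin n))) (hV : n ≤ Module.finrank 𝕜 V + i)
    (hMV : ∀ x ∈ V, ‖toEuclideanLin M x‖ ≤ s * ‖x‖) : sval M i ≤ s := by
  rcases le_or_gt n i with hi | hi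
  · exact (sval_eq_zero M hi).trans_le hs
  obtain ⟨b, hb⟩ := exists_orthonormalBasis_conjTranspose_mul_self_apply M
  let W := (Submodule.span 𝕜 (b '' (Finset.Ioi (⟨i, hi⟩ : Fin n))))ᗮ
  have hW : n ≤ Module.finrank 𝕜 W + (n - 1 - i) := by
    simpa [W, -Finset.coe_Ioi] using
      finrank_le_finrank_orthogonal_span_image_add_card (𝕜 := 𝕜) b
        (Finset.Ioi (⟨i, hi⟩ : Fin n))
  have hVW : Module.finrank 𝕜 (EuclideanSpace 𝕜 (Fin n)) <
      Module.finrank 𝕜 V + Module.finrank 𝕜 W := by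
    rw [finrank_euclideanSpace_fin]
    omega
  obtain ⟨x, hxV, hxW, hx⟩ := exists_mem_inf_ne_zero hVW
  have hlow : sval M i * ‖x‖ ≤ ‖toEuclideanLin M x‖ := by
    refine le_of_sq_le_sq ?_ (norm_nonneg _)
    rw [norm_sq_toEuclideanLin_apply hb, mul_pow, ← b.sum_sq_norm_inner_right, Finset.mul_sum]
    refine Finset.sum_le_sum fun j _ => ?_
    rcases le_or_gt j ⟨i, hi⟩ with hj | hj
    · have := sval_antitone M (Fin.le_def.mp hj)
      have := sval_nonneg M i
      gcongr
    · simp [mem_orthogonal_span_image.mp hxW j (by simpa using hj)]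
  exact le_of_mul_le_mul_right (hlow.trans (hMV x hxV)) (norm_pos_iff.mpr hx)

lemma norm_toEuclideanLin_le_sval {M : Matrix (Fin n) (Fin n) 𝕜}
    {b : OrthonormalBasis (Fin n) 𝕜 (EuclideanSpace 𝕜 (Fin n))}
    (hb : ∀ i, toEuclideanLin (Mᴴ * M) (b i) = ((sval M i ^ 2 : ℝ) : 𝕜) • b i) (i : ℕ)
    {x : EuclideanSpace 𝕜 (Fin n)} (hx : ∀ j : Fin n, (j : ℕ) < i → inner 𝕜 (b j) x = 0) :
    ‖toEuclideanLin M x‖ ≤ sval M i * ‖x‖ := by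
  refine le_of_sq_le_sq ?_ (mul_nonneg (sval_nonneg M i) (norm_nonneg x))
  rw [norm_sq_toEuclideanLin_apply hb, mul_pow, ← b.sum_sq_norm_inner_right, Finset.mul_sum]
  refine Finset.sum_le_sum fun j _ => ?_
  rcases lt_or_ge (j : ℕ) i with hj | hj
  · simp [hx j hj]
  · have := sval_antitone M hj
    have := sval_nonneg M j
    gcongr

lemma finrank_range_toEuclideanLin (C : Matrix (Fin n) (Fin n) 𝕜) :
    Module.finrank 𝕜 (toEuclideanLin C).range = C.rank :=
  (rank_eq_finrank_range_toLin C (PiLp.basisFun 2 𝕜 _) (PiLp.basisFun 2 𝕜 _)).symm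

theorem sval_add_le_sval_sub (M : Matrix (Fin n) (Fin n) 𝕜) {C : Matrix (Fin n) (Fin n) 𝕜}
    (hC : C.rank ≤ r) (i : ℕ) : sval M (i + r) ≤ sval (M - C) i := by
  obtain ⟨b, hb⟩ := exists_orthonormalBasis_conjTranspose_mul_self_apply (M - C)
  let s : Finset (Fin n) := {j | (j : ℕ) < i}
  let V := (Submodule.span 𝕜 (b '' s))ᗮ
  let K := (toEuclideanLin C).ker
  have hV : n ≤ Module.finrank 𝕜 V + s.card := by
    simpa using finrank_le_finrank_orthogonal_span_image_add_card (𝕜 := 𝕜) b s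
  have hs : s.card ≤ i := by simp [s, Fin.card_filter_val_lt]
  have hK : C.rank + Module.finrank 𝕜 K = n := by
    simpa [K, finrank_range_toEuclideanLin] using (toEuclideanLin C).finrank_range_add_finrank_ker
  have hVK := V.finrank_sup_add_finrank_inf_eq K
  have hle : Module.finrank 𝕜 (V ⊔ K : Submodule 𝕜 _) ≤ n := by
    simpa using (V ⊔ K).finrank_le
  refine sval_le_of_finrank_le (sval_nonneg _ i) (V ⊓ K) (by omega) ?_
  rintro x ⟨hxV, hxK⟩
  have hMx : toEuclideanLin M x = toEuclideanLin (M - C) x := by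
    rw [map_sub, LinearMap.sub_apply, LinearMap.mem_ker.mp hxK, sub_zero]
  rw [hMx]
  exact norm_toEuclideanLin_le_sval hb i fun j hj =>
    mem_orthogonal_span_image.mp hxV j (by simpa [s] using hj)

lemma exists_rank_le_finrank_sub_apply_eq (M : Matrix (Fin n) (Fin n) 𝕜)
    (W : Submodule 𝕜 (EuclideanSpace 𝕜 (Fin n))) :
    ∃ B : Matrix (Fin n) (Fin n) 𝕜, B.rank ≤ Module.finrank 𝕜 W ∧
      ∀ x, toEuclideanLin (M - B) x = toEuclideanLin M (Wᗮ.starProjection x) := by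
  let P := toEuclideanLin.symm W.starProjection.toLinearMap
  have hP : toEuclideanLin P = W.starProjection.toLinearMap := LinearEquiv.apply_symm_apply _ _
  refine ⟨M * P, (rank_mul_le_right M P).trans ?_, fun x => ?_⟩
  · rw [← finrank_range_toEuclideanLin, hP, Submodule.range_starProjection]
  · rw [Submodule.starProjection_orthogonal_val, map_sub, map_sub, LinearMap.sub_apply,
      toLpLin_mul_same, LinearMap.comp_apply, hP]
    rfl

theorem exists_rank_le_sval_sub_le (M : Matrix (Fin n) (Fin n) 𝕜) (r : ℕ) :
    ∃ B : Matrix (Fin n) (Fin n) 𝕜, B.rank ≤ r ∧ ∀ i, sval (M - B) i ≤ sval M (i + r) := by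
  obtain ⟨b, hb⟩ := exists_orthonormalBasis_conjTranspose_mul_self_apply M
  let s : Finset (Fin n) := {j | (j : ℕ) < r}
  let W := Submodule.span 𝕜 (b '' s)
  obtain ⟨B, hB, hMB⟩ := exists_rank_le_finrank_sub_apply_eq M W
  have hs : s.card ≤ r := by simp [s, Fin.card_filter_val_lt]
  refine ⟨B, (hB.trans (finrank_span_image_le_card b s)).trans hs, fun i => ?_⟩
  let t : Finset (Fin n) := {j | r ≤ (j : ℕ) ∧ (j : ℕ) < i + r}
  have ht : t.card ≤ i := by
    refine (Finset.card_le_card_of_injOn Fin.val (t := Finset.Ico r (i + r)) (fun j hj => ?_)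
      Fin.val_injective.injOn).trans (by simp)
    simpa [t] using hj
  have hV := finrank_le_finrank_orthogonal_span_image_add_card (𝕜 := 𝕜) b t
  rw [finrank_euclideanSpace_fin] at hV
  refine sval_le_of_finrank_le (sval_nonneg M _) _ (hV.trans (by gcongr)) fun x hx => ?_
  have hWx (j : Fin n) (hj : (j : ℕ) < i + r) : inner 𝕜 (b j) (Wᗮ.starProjection x) = 0 := by
    rcases lt_or_ge (j : ℕ) r with hjr | hjr
    · exact mem_orthogonal_span_image.mp (Wᗮ.starProjection_apply_mem x) j (by simpa [s] using hjr)
    · have hbW : b j ∈ Wᗮ := mem_orthogonal_span_image.mpr fun l hl =>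
        b.inner_eq_zero (by rintro rfl; exact hjr.not_gt (by simpa [s] using hl))
      rw [← Submodule.inner_starProjection_left_eq_right,
        Submodule.starProjection_eq_self_iff.mpr hbW]
      exact mem_orthogonal_span_image.mp hx j (by simpa [t] using ⟨hjr, hj⟩)
  rw [hMB]
  exact (norm_toEuclideanLin_le_sval hb (i + r) hWx).trans
    (mul_le_mul_of_nonneg_left (Wᗮ.norm_starProjection_apply_le x) (sval_nonneg M _))

lemma schatten_nonneg (p : ℝ≥0∞) (M : Matrix (Fin n) (Fin n) 𝕜) : 0 ≤ schatten p M := by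
  unfold schatten
  split_ifs
  · exact sval_nonneg M 0
  · exact Real.rpow_nonneg
      (Finset.sum_nonneg fun i _ => Real.rpow_nonneg (sval_nonneg M i) _) _

lemma schatten_mono (p : ℝ≥0∞) {M N : Matrix (Fin n) (Fin n) 𝕜}
    (h : ∀ i, sval M i ≤ sval N i) : schatten p M ≤ schatten p N := by
  unfold schatten
  split_ifs
  · exact h 0
  · have := sval_nonneg M
    have := fun i => Real.rpow_nonneg (this i) p.toReal
    have := Finset.sum_nonneg fun i (_ : i ∈ Finset.range n) => this i
    gcongr
    · exact sval_nonneg M _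
    · exact h _

theorem isBestRankApprox_truncate (M : Matrix (Fin n) (Fin n) 𝕜) (r : ℕ) :
    IsBestRankApprox M (truncate M r) r := by
  obtain ⟨B, hB, hMB⟩ := exists_rank_le_sval_sub_le M r
  have h : ∃ B, IsBestRankApprox M B r := ⟨B, hB, fun p _ C hC =>
    schatten_mono p fun i => (hMB i).trans (sval_add_le_sval_sub M hC i)⟩
  rw [truncate, dif_pos h]
  exact h.choose_spec

theorem tailNorm_le_schatten_sub (p : ℝ≥0∞) (M : Matrix (Fin n) (Fin n) 𝕜)
    {C : Matrix (Fin n) (Fin n) 𝕜} (hC : C.rank ≤ r) :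
    tailNorm p M r ≤ schatten p (M - C) := by
  have hweyl := sval_add_le_sval_sub M hC
  unfold tailNorm schatten
  split_ifs
  · simpa using hweyl 0
  have hnonneg (i : ℕ) : 0 ≤ sval M i ^ p.toReal := Real.rpow_nonneg (sval_nonneg M i) _
  refine Real.rpow_le_rpow (Finset.sum_nonneg fun i _ => hnonneg i) ?_ (by positivity)
  calc ∑ i ∈ Finset.Ico r n, sval M i ^ p.toReal
      = ∑ i ∈ Finset.range (n - r), sval M (i + r) ^ p.toReal := by
        rw [Finset.sum_Ico_eq_sum_range]
        simp only [add_comm]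
    _ ≤ ∑ i ∈ Finset.range n, sval M (i + r) ^ p.toReal :=
        Finset.sum_le_sum_of_subset_of_nonneg (Finset.range_mono (Nat.sub_le n r))
          fun i _ _ => hnonneg _
    _ ≤ ∑ i ∈ Finset.range n, sval (M - C) i ^ p.toReal :=
        Finset.sum_le_sum fun i _ =>
          Real.rpow_le_rpow (sval_nonneg M _) (hweyl i) ENNReal.toReal_nonneg

lemma tailNorm_one (M : Matrix (Fin n) (Fin n) 𝕜) (r : ℕ) :
    tailNorm 1 M r = ∑ i : {i : Fin n // ¬ (i : ℕ) < r}, sval M i := by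
  rw [tailNorm, if_neg ENNReal.one_ne_top]
  simp only [ENNReal.toReal_one, Real.rpow_one, div_one]
  rw [← Finset.sum_subtype (Finset.univ.filter fun i : Fin n => ¬ (i : ℕ) < r) (by simp)
    (fun i => sval M i), Finset.sum_filter,
    Fin.sum_univ_eq_sum_range (fun i => if ¬ i < r then sval M i else 0), ← Finset.sum_filter]
  congr 1
  ext i
  simp [and_comm]

end SingularValues

section FrobeniusNorm

open scoped Matrix.Norms.Frobenius

variable {m n : ℕ}

lemma frobenius_norm_sq (M : Matrix (Fin m) (Fin n) 𝕜) :
    ‖M‖ ^ 2 = RCLike.re (Mᴴ * M).trace := by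
  rw [frobenius_norm_def, ← Real.sqrt_eq_rpow, Real.sq_sqrt (by positivity), Finset.sum_comm]
  simp [trace, mul_apply, RCLike.conj_mul, -map_pow, ← RCLike.ofReal_pow]

lemma trace_eq_sum_of_apply_orthonormalBasis_eq {M : Matrix (Fin n) (Fin n) 𝕜} {d : Fin n → ℝ}
    {b : OrthonormalBasis (Fin n) 𝕜 (EuclideanSpace 𝕜 (Fin n))}
    (hb : ∀ i, toEuclideanLin M (b i) = (d i : 𝕜) • b i) : RCLike.re M.trace = ∑ i, d i := by
  have htrace : M.trace = LinearMap.trace 𝕜 _ (toEuclideanLin M) :=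
    (trace_toLin_eq M (PiLp.basisFun 2 𝕜 _)).symm
  simp only [htrace, LinearMap.trace_eq_sum_inner _ b, hb, inner_smul_right, map_sum]
  simp

lemma schatten_one (M : Matrix (Fin n) (Fin n) 𝕜) :
    schatten 1 M = ∑ i : Fin n, sval M i := by
  simp [schatten, Finset.sum_range]

lemma schatten_two (M : Matrix (Fin n) (Fin n) 𝕜) : schatten 2 M = ‖M‖ := by
  obtain ⟨b, hb⟩ := exists_orthonormalBasis_conjTranspose_mul_self_apply M
  rw [← Real.sqrt_sq (norm_nonneg M), frobenius_norm_sq,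
    trace_eq_sum_of_apply_orthonormalBasis_eq hb, Real.sqrt_eq_rpow]
  simp [schatten, Finset.sum_range]

lemma apply_eq_smul_of_apply_apply_eq {E : Type*} [NormedAddCommGroup E] [InnerProductSpace 𝕜 E]
    {T : E →ₗ[𝕜] E} (hT : T.IsPositive) {s : ℝ} (hs : 0 ≤ s) {x : E}
    (hx : T (T x) = ((s ^ 2 : ℝ) : 𝕜) • x) : T x = (s : 𝕜) • x := by
  let y := T x - (s : 𝕜) • x
  have hy : T y = -(s : 𝕜) • y := by
    simp only [y, map_sub, map_smul, hx]
    push_cast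
    module
  rw [← sub_eq_zero]
  change y = 0
  rcases hs.eq_or_lt with rfl | hs
  · have hyx : y = T x := by simp [y]
    rw [← inner_self_eq_zero (𝕜 := 𝕜)]
    nth_rw 2 [hyx]
    rw [← hT.isSymmetric, hy]
    simp
  · have hpos := hT.re_inner_nonneg_left y
    rw [hy, inner_smul_left, map_neg, RCLike.conj_ofReal, neg_mul, map_neg, RCLike.re_ofReal_mul,
      inner_self_eq_norm_sq] at hpos
    by_contra hy0
    have : 0 < s * ‖y‖ ^ 2 := by positivity
    linarith

lemma exists_orthonormalBasis_apply_of_posSemidef {A : Matrix (Fin n) (Fin n) 𝕜}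
    (hA : A.PosSemidef) : ∃ b : OrthonormalBasis (Fin n) 𝕜 (EuclideanSpace 𝕜 (Fin n)), ∀ i,
      toEuclideanLin A (b i) = (sval A i : 𝕜) • b i := by
  obtain ⟨b, hb⟩ := exists_orthonormalBasis_conjTranspose_mul_self_apply A
  refine ⟨b, fun i => apply_eq_smul_of_apply_apply_eq (isPositive_toEuclideanLin_iff.mpr hA)
    (sval_nonneg A i) ?_⟩
  rw [← hb i, hA.1.eq, toLpLin_mul_same, LinearMap.comp_apply]

theorem schatten_one_eq_re_trace {A : Matrix (Fin n) (Fin n) 𝕜} (hA : A.PosSemidef) :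
    schatten 1 A = RCLike.re A.trace := by
  obtain ⟨b, hb⟩ := exists_orthonormalBasis_apply_of_posSemidef hA
  rw [schatten_one, trace_eq_sum_of_apply_orthonormalBasis_eq hb]

end FrobeniusNorm

section RangeProjection

variable {k m n : ℕ}

lemma isMoorePenrose_cfc_inv {H : Matrix (Fin n) (Fin n) 𝕜} (hH : H.IsHermitian) :
    IsMoorePenrose H (cfc (fun x : ℝ => x⁻¹) H) := by
  have hcont (f : ℝ → ℝ) : ContinuousOn f (spectrum ℝ H) :=
    (Matrix.finite_real_spectrum (A := H)).continuousOn f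
  have hsa : IsSelfAdjoint H := hH
  have hmul (f g : ℝ → ℝ) : cfc f H * cfc g H = cfc (fun x => f x * g x) H :=
    (cfc_mul f g H (hcont f) (hcont g)).symm
  have hid : H = cfc (fun x : ℝ => x) H := (cfc_id' ℝ H).symm
  have hstar (f : ℝ → ℝ) : (cfc f H)ᴴ = cfc f H := (cfc_predicate f H : IsSelfAdjoint _)
  set X := cfc (fun x : ℝ => x⁻¹) H
  have hHX : H * X = cfc (fun x : ℝ => x * x⁻¹) H :=
    (congrArg (· * X) hid).trans (hmul _ _)
  have hXH : X * H = cfc (fun x : ℝ => x⁻¹ * x) H :=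
    (congrArg (X * ·) hid).trans (hmul _ _)
  refine ⟨?_, ?_, ?_, ?_⟩
  · have hmul_H : cfc (fun x : ℝ => x * x⁻¹) H * H = cfc (fun x : ℝ => x * x⁻¹ * x) H :=
      (congrArg (cfc (fun x : ℝ => x * x⁻¹) H * ·) hid).trans (hmul _ _)
    simpa only [hHX, mul_inv_mul_cancel, ← hid] using hmul_H
  · have hinv (x : ℝ) : x⁻¹ * x * x⁻¹ = x⁻¹ := by
      simpa only [inv_inv] using mul_inv_mul_cancel x⁻¹
    rw [hXH, hmul]
    simp only [hinv, X]
  · rw [hHX, hstar]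
  · rw [hXH, hstar]

lemma isMoorePenrose_pinv {H : Matrix (Fin n) (Fin n) 𝕜} (hH : H.IsHermitian) :
    IsMoorePenrose H (pinv H) := by
  have h : ∃ X, IsMoorePenrose H X := ⟨_, isMoorePenrose_cfc_inv hH⟩
  rw [pinv, dif_pos h]
  exact h.choose_spec

/-- The orthogonal projection onto the column space of `Y`, as a square matrix. -/
noncomputable def rangeProj (Y : Matrix (Fin m) (Fin k) 𝕜) : Matrix (Fin m) (Fin m) 𝕜 :=
  Y * pinv (Yᴴ * Y) * Yᴴ

lemma rangeProj_mul_self (Y : Matrix (Fin m) (Fin k) 𝕜) : rangeProj Y * Y = Y := by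
  obtain ⟨hpinv, -⟩ := isMoorePenrose_pinv (isHermitian_conjTranspose_mul_self Y)
  have hgram : Yᴴ * Y * (pinv (Yᴴ * Y) * (Yᴴ * Y) - 1) = 0 := by
    rw [Matrix.mul_sub, ← Matrix.mul_assoc, hpinv, Matrix.mul_one, sub_self]
  rw [conjTranspose_mul_self_mul_eq_zero, Matrix.mul_sub, Matrix.mul_one, sub_eq_zero] at hgram
  simpa only [rangeProj, Matrix.mul_assoc] using hgram

lemma mul_rangeProj {P : Matrix (Fin m) (Fin m) 𝕜} {Y : Matrix (Fin m) (Fin k) 𝕜}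
    (h : P * Y = Y) : P * rangeProj Y = rangeProj Y := by
  rw [rangeProj, ← Matrix.mul_assoc, ← Matrix.mul_assoc, h]

lemma isStarProjection_rangeProj (Y : Matrix (Fin m) (Fin k) 𝕜) :
    IsStarProjection (rangeProj Y) := by
  have hself := rangeProj_mul_self Y
  have hYstar : Yᴴ * (rangeProj Y)ᴴ = Yᴴ := by rw [← conjTranspose_mul, hself]
  have hsa : rangeProj Y * (rangeProj Y)ᴴ = rangeProj Y :=
    (Matrix.mul_assoc _ Yᴴ _).trans (congrArg (Y * pinv (Yᴴ * Y) * ·) hYstar)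
  refine ⟨mul_rangeProj hself, ?_⟩
  rw [IsSelfAdjoint, star_eq_conjTranspose, ← hsa, conjTranspose_mul, conjTranspose_conjTranspose]

lemma rank_rangeProj_le (Y : Matrix (Fin m) (Fin k) 𝕜) : (rangeProj Y).rank ≤ Y.rank := by
  rw [rangeProj, Matrix.mul_assoc]
  exact rank_mul_le_left _ _

lemma nystrom_conjTranspose_mul_self (S : Matrix (Fin m) (Fin n) 𝕜)
    (Ω : Matrix (Fin n) (Fin k) 𝕜) :
    nystrom (Sᴴ * S) Ω = Sᴴ * rangeProj (S * Ω) * S := by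
  simp only [nystrom, rangeProj, conjTranspose_mul, Matrix.mul_assoc]

end RangeProjection

section BestRankApprox

open scoped MatrixOrder Matrix.Norms.Frobenius

variable {k m n r : ℕ}

lemma frobenius_norm_sq_mul_of_isStarProjection {P : Matrix (Fin m) (Fin m) 𝕜}
    (hP : IsStarProjection P) (W : Matrix (Fin m) (Fin n) 𝕜) :
    ‖P * W‖ ^ 2 = schatten 1 (Wᴴ * P * W) := by
  have hPP : Pᴴ * P = P := by
    rw [← star_eq_conjTranspose, hP.isSelfAdjoint.star_eq, hP.isIdempotentElem.eq]
  have hPW : (P * W)ᴴ * (P * W) = Wᴴ * P * W := by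
    rw [conjTranspose_mul, Matrix.mul_assoc, ← Matrix.mul_assoc Pᴴ, hPP, Matrix.mul_assoc]
  rw [frobenius_norm_sq, ← schatten_one_eq_re_trace (posSemidef_conjTranspose_mul_self _), hPW]

lemma schatten_one_add {M N : Matrix (Fin n) (Fin n) 𝕜} (hM : M.PosSemidef)
    (hN : N.PosSemidef) : schatten 1 (M + N) = schatten 1 M + schatten 1 N := by
  rw [schatten_one_eq_re_trace hM, schatten_one_eq_re_trace hN,
    schatten_one_eq_re_trace (hM.add hN), trace_add, map_add]

lemma posSemidef_conjTranspose_mul_mul_of_isStarProjection {P : Matrix (Fin m) (Fin m) 𝕜}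
    (hP : IsStarProjection P) (W : Matrix (Fin m) (Fin n) 𝕜) : (Wᴴ * P * W).PosSemidef :=
  (nonneg_iff_posSemidef.mp hP.nonneg).conjTranspose_mul_mul_same W

lemma norm_sq_eq_norm_sq_mul_add_norm_sq_sub {P : Matrix (Fin m) (Fin m) 𝕜}
    (hP : IsStarProjection P) (W : Matrix (Fin m) (Fin n) 𝕜) :
    ‖W‖ ^ 2 = ‖P * W‖ ^ 2 + ‖W - P * W‖ ^ 2 := by
  have hone := frobenius_norm_sq_mul_of_isStarProjection (.one _) W
  have hsub : W - P * W = (1 - P) * W := by rw [Matrix.sub_mul, Matrix.one_mul]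
  rw [hsub, frobenius_norm_sq_mul_of_isStarProjection hP,
    frobenius_norm_sq_mul_of_isStarProjection hP.one_sub, ← schatten_one_add
      (posSemidef_conjTranspose_mul_mul_of_isStarProjection hP W)
      (posSemidef_conjTranspose_mul_mul_of_isStarProjection hP.one_sub W),
    ← Matrix.add_mul, ← Matrix.mul_add, add_sub_cancel, ← hone, Matrix.one_mul]

lemma rangeProj_mul_eq_of_norm_sub_le {M B : Matrix (Fin n) (Fin n) 𝕜} (hB : B.rank ≤ r)
    (h : ∀ C : Matrix (Fin n) (Fin n) 𝕜, C.rank ≤ r → ‖M - B‖ ≤ ‖M - C‖) :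
    rangeProj B * M = B := by
  have hpyth := norm_sq_eq_norm_sq_mul_add_norm_sq_sub (isStarProjection_rangeProj B) (M - B)
  have hopt := h (rangeProj B * M)
    ((rank_mul_le_left _ _).trans ((rank_rangeProj_le B).trans hB))
  have hsub : M - B - rangeProj B * (M - B) = M - rangeProj B * M := by
    rw [Matrix.mul_sub, rangeProj_mul_self, sub_sub_sub_cancel_right]
  have hsq : ‖rangeProj B * (M - B)‖ ^ 2 ≤ 0 := by
    have := pow_le_pow_left₀ (norm_nonneg _) hopt 2
    rw [hsub] at hpyth
    linarith
  have hzero : rangeProj B * (M - B) = 0 := by simpa using hsq.antisymm (sq_nonneg _)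
  rwa [Matrix.mul_sub, rangeProj_mul_self, sub_eq_zero] at hzero

lemma commute_of_commute_mul_self {M P : Matrix (Fin n) (Fin n) 𝕜} (hM : M.PosSemidef)
    (h : Commute (M * M) P) : Commute M P := by
  have hsqrt : Commute (CFC.sqrt (M * M)) P := h.cfcₙ_nnreal NNReal.sqrt
  rwa [CFC.sqrt_mul_self M hM.nonneg] at hsqrt

/- With `P` and `Q` the projections onto the column spaces of `B` and `Bᴴ`, optimality gives
`B = P * M = M * Q`, so `P * M ^ 2 = M * Q * M` is Hermitian and `P` commutes with `M ^ 2`, hence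
with `M`. -/
lemma IsBestRankApprox.exists_sub_eq_conjTranspose_mul_mul {M B : Matrix (Fin n) (Fin n) 𝕜}
    (hB : IsBestRankApprox M B r) (hM : M.PosSemidef) :
    ∃ P : Matrix (Fin n) (Fin n) 𝕜, P.rank ≤ r ∧ M - B = (1 - P)ᴴ * M * (1 - P) := by
  have hopt (C : Matrix (Fin n) (Fin n) 𝕜) (hC : C.rank ≤ r) : ‖M - B‖ ≤ ‖M - C‖ := by
    simpa only [schatten_two] using hB.2 2 one_le_two C hC
  have hleft : rangeProj B * M = B := rangeProj_mul_eq_of_norm_sub_le hB.1 hopt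
  have hstar : rangeProj Bᴴ * M = Bᴴ := by
    refine rangeProj_mul_eq_of_norm_sub_le ((rank_conjTranspose B).trans_le hB.1) fun C hC => ?_
    have := hopt Cᴴ ((rank_conjTranspose C).trans_le hC)
    rwa [← frobenius_norm_conjTranspose, ← frobenius_norm_conjTranspose (M - Cᴴ),
      conjTranspose_sub, conjTranspose_sub, conjTranspose_conjTranspose, hM.1] at this
  have hsa (Y : Matrix (Fin n) (Fin n) 𝕜) : (rangeProj Y)ᴴ = rangeProj Y :=
    (isStarProjection_rangeProj Y).isSelfAdjoint
  have hright : M * rangeProj Bᴴ = B := by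
    have := congrArg conjTranspose hstar
    rwa [conjTranspose_mul, conjTranspose_conjTranspose, hM.1, hsa] at this
  have hsq : Commute (M * M) (rangeProj B) := by
    have hPM : rangeProj B * (M * M) = M * rangeProj Bᴴ * M := by
      rw [← Matrix.mul_assoc, hleft, hright]
    have hMP := congrArg conjTranspose hPM
    simp only [conjTranspose_mul, hM.1.eq, hsa] at hMP
    exact hMP.trans ((Matrix.mul_assoc _ _ _).symm.trans hPM.symm)
  have hcomm : M * rangeProj B = rangeProj B * M := commute_of_commute_mul_self hM hsq
  refine ⟨rangeProj B, (rank_rangeProj_le B).trans hB.1, ?_⟩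
  have hidem := (isStarProjection_rangeProj B).one_sub.isIdempotentElem.eq
  calc M - B = (1 - rangeProj B) * M := by rw [Matrix.sub_mul, Matrix.one_mul, hleft]
    _ = (1 - rangeProj B) * ((1 - rangeProj B) * M) := by rw [← Matrix.mul_assoc, hidem]
    _ = (1 - rangeProj B) * (M * (1 - rangeProj B)) := by
      rw [Matrix.mul_sub, hcomm, Matrix.sub_mul _ _ M, Matrix.mul_one, Matrix.one_mul]
    _ = (1 - rangeProj B)ᴴ * M * (1 - rangeProj B) := by
      rw [conjTranspose_sub, conjTranspose_one, hsa, Matrix.mul_assoc]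

lemma IsBestRankApprox.posSemidef_sub {M B : Matrix (Fin n) (Fin n) 𝕜}
    (hB : IsBestRankApprox M B r) (hM : M.PosSemidef) : (M - B).PosSemidef := by
  obtain ⟨P, -, hP⟩ := hB.exists_sub_eq_conjTranspose_mul_mul hM
  exact hP ▸ hM.conjTranspose_mul_mul_same _

lemma norm_sq_sub_rangeProj_mul_le (S Z : Matrix (Fin m) (Fin n) 𝕜) :
    ‖S - rangeProj Z * S‖ ^ 2 ≤ ‖S - Z‖ ^ 2 := by
  have hpyth := norm_sq_eq_norm_sq_mul_add_norm_sq_sub (isStarProjection_rangeProj Z) (S - Z)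
  rw [Matrix.mul_sub, rangeProj_mul_self, sub_sub_sub_cancel_right] at hpyth
  linarith [sq_nonneg ‖rangeProj Z * S - Z‖]

lemma posSemidef_nystrom_conjTranspose_mul_self (S : Matrix (Fin m) (Fin n) 𝕜)
    (Ω : Matrix (Fin n) (Fin k) 𝕜) : (nystrom (Sᴴ * S) Ω).PosSemidef := by
  rw [nystrom_conjTranspose_mul_self]
  exact posSemidef_conjTranspose_mul_mul_of_isStarProjection (isStarProjection_rangeProj _) S

lemma schatten_one_sub_truncate_nystrom (S : Matrix (Fin m) (Fin n) 𝕜)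
    (Ω : Matrix (Fin n) (Fin k) 𝕜) (r : ℕ) :
    schatten 1 (Sᴴ * S - truncate (nystrom (Sᴴ * S) Ω) r) =
      ‖S - rangeProj (S * Ω) * S‖ ^ 2 +
        schatten 1 (nystrom (Sᴴ * S) Ω - truncate (nystrom (Sᴴ * S) Ω) r) := by
  have hP := isStarProjection_rangeProj (S * Ω)
  have hN := posSemidef_nystrom_conjTranspose_mul_self S Ω
  have hAN : Sᴴ * S - nystrom (Sᴴ * S) Ω = Sᴴ * (1 - rangeProj (S * Ω)) * S := by
    rw [nystrom_conjTranspose_mul_self, Matrix.mul_sub, Matrix.sub_mul, Matrix.mul_one]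
  have hSP : S - rangeProj (S * Ω) * S = (1 - rangeProj (S * Ω)) * S := by
    rw [Matrix.sub_mul, Matrix.one_mul]
  rw [hSP, frobenius_norm_sq_mul_of_isStarProjection hP.one_sub, ← hAN, ← schatten_one_add,
    sub_add_sub_cancel]
  · rw [hAN]
    exact posSemidef_conjTranspose_mul_mul_of_isStarProjection hP.one_sub S
  · exact (isBestRankApprox_truncate _ r).posSemidef_sub hN

theorem schatten_one_sub_truncate_nystrom_le (S : Matrix (Fin m) (Fin n) 𝕜)
    (Ω : Matrix (Fin n) (Fin k) 𝕜) {X : Matrix (Fin k) (Fin n) 𝕜} (hX : X.rank ≤ r) :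
    schatten 1 (Sᴴ * S - truncate (nystrom (Sᴴ * S) Ω) r) ≤ ‖S - S * Ω * X‖ ^ 2 := by
  let P := rangeProj (S * Ω)
  let Q := rangeProj (S * Ω * X)
  have hP : IsStarProjection P := isStarProjection_rangeProj _
  have hQ : IsStarProjection Q := isStarProjection_rangeProj _
  have hPQ : P * Q = Q := mul_rangeProj (by rw [← Matrix.mul_assoc, rangeProj_mul_self])
  have hrank : (Sᴴ * Q * S).rank ≤ r :=
    (rank_mul_le_left _ _).trans <| (rank_mul_le_right _ _).trans <|
      (rank_rangeProj_le _).trans <| (rank_mul_le_right _ _).trans hX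
  have hnystrom : Sᴴ * (P - Q) * S = nystrom (Sᴴ * S) Ω - Sᴴ * Q * S := by
    rw [Matrix.mul_sub, Matrix.sub_mul, nystrom_conjTranspose_mul_self]
  have hproj : P * (S - Q * S) = (P - Q) * S := by
    rw [Matrix.mul_sub, Matrix.sub_mul, ← Matrix.mul_assoc, hPQ]
  have hrest : S - Q * S - (P - Q) * S = S - P * S := by
    rw [Matrix.sub_mul, sub_sub_sub_cancel_right]
  have hpyth := norm_sq_eq_norm_sq_mul_add_norm_sq_sub hP (S - Q * S)
  rw [hproj, hrest, frobenius_norm_sq_mul_of_isStarProjection (hQ.sub_of_mul_eq_right hP hPQ),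
    hnystrom] at hpyth
  calc schatten 1 (Sᴴ * S - truncate (nystrom (Sᴴ * S) Ω) r)
      = ‖S - P * S‖ ^ 2 +
        schatten 1 (nystrom (Sᴴ * S) Ω - truncate (nystrom (Sᴴ * S) Ω) r) :=
        schatten_one_sub_truncate_nystrom S Ω r
    _ ≤ ‖S - P * S‖ ^ 2 + schatten 1 (nystrom (Sᴴ * S) Ω - Sᴴ * Q * S) := by
        gcongr
        exact (isBestRankApprox_truncate _ r).2 1 le_rfl _ hrank
    _ = ‖S - Q * S‖ ^ 2 := by rw [hpyth, add_comm]
    _ ≤ ‖S - S * Ω * X‖ ^ 2 := norm_sq_sub_rangeProj_mul_le S _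

theorem exists_rank_le_norm_sq_sub_eq (S : Matrix (Fin m) (Fin n) 𝕜)
    (Ω : Matrix (Fin n) (Fin k) 𝕜) (r : ℕ) :
    ∃ X : Matrix (Fin k) (Fin n) 𝕜, X.rank ≤ r ∧
      ‖S - S * Ω * X‖ ^ 2 = schatten 1 (Sᴴ * S - truncate (nystrom (Sᴴ * S) Ω) r) := by
  have hP := isStarProjection_rangeProj (S * Ω)
  have hN := posSemidef_nystrom_conjTranspose_mul_self S Ω
  obtain ⟨R, hR, hNB⟩ :=
    (isBestRankApprox_truncate (nystrom (Sᴴ * S) Ω) r).exists_sub_eq_conjTranspose_mul_mul hN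
  refine ⟨pinv ((S * Ω)ᴴ * (S * Ω)) * (S * Ω)ᴴ * S * R, (rank_mul_le_right _ _).trans hR, ?_⟩
  have hX : S * Ω * (pinv ((S * Ω)ᴴ * (S * Ω)) * (S * Ω)ᴴ * S * R) =
      rangeProj (S * Ω) * S * R := by
    simp only [rangeProj, Matrix.mul_assoc]
  have hPX : rangeProj (S * Ω) * (S - rangeProj (S * Ω) * S * R) =
      rangeProj (S * Ω) * (S * (1 - R)) := by
    rw [Matrix.mul_assoc _ S, Matrix.mul_sub, ← Matrix.mul_assoc, hP.isIdempotentElem.eq,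
      ← Matrix.mul_sub, Matrix.mul_sub S, Matrix.mul_one]
  have hrest : S - rangeProj (S * Ω) * S * R - rangeProj (S * Ω) * (S * (1 - R)) =
      S - rangeProj (S * Ω) * S := by
    rw [Matrix.mul_sub, Matrix.mul_one, Matrix.mul_sub, ← Matrix.mul_assoc]
    abel
  rw [hX, norm_sq_eq_norm_sq_mul_add_norm_sq_sub hP, hPX, hrest,
    frobenius_norm_sq_mul_of_isStarProjection hP, schatten_one_sub_truncate_nystrom, hNB,
    nystrom_conjTranspose_mul_self, conjTranspose_mul, add_comm]
  simp only [Matrix.mul_assoc]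

theorem upperSemicontinuous_schatten_one_sub_truncate_nystrom {A : Matrix (Fin n) (Fin n) 𝕜}
    (hA : A.PosSemidef) (r : ℕ) : UpperSemicontinuous fun Ω : Matrix (Fin n) (Fin k) 𝕜 =>
      schatten 1 (A - truncate (nystrom A Ω) r) := by
  obtain ⟨S, rfl⟩ := CStarAlgebra.nonneg_iff_eq_star_mul_self.mp hA.nonneg
  intro Ω₀ y hy
  obtain ⟨X, hX, hΩ₀⟩ := exists_rank_le_norm_sq_sub_eq S Ω₀ r
  have hcont : Continuous fun Ω : Matrix (Fin n) (Fin k) 𝕜 => ‖S - S * Ω * X‖ ^ 2 := by fun_prop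
  filter_upwards [hcont.continuousAt.eventually_lt_const (hΩ₀.trans_lt hy)] with Ω hΩ
  exact (schatten_one_sub_truncate_nystrom_le S Ω hX).trans_lt hΩ

lemma schatten_one_sub_truncate_nystrom_le_schatten_one {A : Matrix (Fin n) (Fin n) 𝕜}
    (hA : A.PosSemidef) (Ω : Matrix (Fin n) (Fin k) 𝕜) (r : ℕ) :
    schatten 1 (A - truncate (nystrom A Ω) r) ≤ schatten 1 A := by
  obtain ⟨S, rfl⟩ := CStarAlgebra.nonneg_iff_eq_star_mul_self.mp hA.nonneg
  have h := schatten_one_sub_truncate_nystrom_le S Ω (X := 0) (rank_zero.trans_le r.zero_le)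
  rwa [Matrix.mul_zero, sub_zero, frobenius_norm_sq, ← star_eq_conjTranspose,
    ← schatten_one_eq_re_trace hA] at h

end BestRankApprox

section GaussianMoments

open Module

lemma integral_exp_mul_sq_gaussianReal {s : ℝ} (hs : 0 < s) :
    ∫ x, Real.exp ((1 - s) / 2 * x ^ 2) ∂gaussianReal 0 1 = s ^ (-(1 / 2) : ℝ) := by
  have hpdf (x : ℝ) : gaussianPDFReal 0 1 x • Real.exp ((1 - s) / 2 * x ^ 2) =
      (√(2 * Real.pi))⁻¹ * Real.exp (-(s / 2) * x ^ 2) := by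
    simp only [gaussianPDFReal, smul_eq_mul, NNReal.coe_one, mul_one, sub_zero]
    rw [mul_assoc, ← Real.exp_add]
    congr 2
    ring
  simp only [integral_gaussianReal_eq_integral_smul one_ne_zero, hpdf]
  rw [integral_const_mul, integral_gaussian, Real.rpow_neg hs.le, ← Real.sqrt_eq_rpow,
    ← Real.sqrt_inv, ← Real.sqrt_inv, ← Real.sqrt_mul (by positivity)]
  congr 1
  field_simp

variable {E : Type*} [NormedAddCommGroup E] [InnerProductSpace ℝ E] [FiniteDimensional ℝ E]
  [MeasurableSpace E] [BorelSpace E]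

lemma integral_exp_mul_norm_sq_stdGaussian {s : ℝ} (hs : 0 < s) :
    ∫ x, Real.exp ((1 - s) / 2 * ‖x‖ ^ 2) ∂stdGaussian E = s ^ (-(finrank ℝ E / 2) : ℝ) := by
  let b := stdOrthonormalBasis ℝ E
  have hexp (x : Fin (finrank ℝ E) → ℝ) : Real.exp ((1 - s) / 2 * ‖∑ i, x i • b i‖ ^ 2) =
      ∏ i, Real.exp ((1 - s) / 2 * x i ^ 2) := by
    rw [← real_inner_self_eq_norm_sq, b.orthonormal.inner_sum, ← Real.exp_sum, Finset.mul_sum]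
    simp only [conj_trivial, sq]
  rw [stdGaussian_eq_map_pi_orthonormalBasis b,
    integral_map (Measurable.aemeasurable (by fun_prop)) (by fun_prop)]
  simp only [hexp]
  rw [integral_fintype_prod_eq_prod (f := fun _ y => Real.exp ((1 - s) / 2 * y ^ 2)),
    Finset.prod_const, integral_exp_mul_sq_gaussianReal hs, ← Real.rpow_mul_natCast hs.le,
    Finset.card_univ, Fintype.card_fin]
  congr 1
  ring

lemma lintegral_Ioi_exp_mul_eq_inv {q : ℝ} (hq : 0 ≤ q) :
    ∫⁻ s in Set.Ioi (1 : ℝ), ENNReal.ofReal (Real.exp ((1 - s) / 2 * q)) =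
      2 * (ENNReal.ofReal q)⁻¹ := by
  obtain rfl | hq := hq.eq_or_lt
  · simp
  have hexp (s : ℝ) : Real.exp ((1 - s) / 2 * q) = Real.exp (q / 2) * Real.exp (-(q / 2) * s) := by
    rw [← Real.exp_add]
    congr 1
    ring
  have hq' : -(q / 2) < 0 := by linarith
  simp only [hexp]
  rw [← ofReal_integral_eq_lintegral_ofReal
      ((integrableOn_exp_mul_Ioi hq' 1).const_mul _) (.of_forall fun s => by positivity),
    integral_const_mul, integral_exp_mul_Ioi hq', ← ENNReal.ofReal_inv_of_pos hq,
    ← ENNReal.ofReal_ofNat 2, ← ENNReal.ofReal_mul zero_le_two, mul_one, neg_div_neg_eq,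
    ← mul_div_assoc, ← Real.exp_add, add_neg_cancel, Real.exp_zero]
  congr 1
  field_simp

lemma lintegral_Ioi_rpow_neg_half {d : ℕ} (hd : 2 < d) :
    ∫⁻ s in Set.Ioi (1 : ℝ), ENNReal.ofReal (s ^ (-(d / 2) : ℝ)) =
      2 * ((d - 2 : ℕ) : ℝ≥0∞)⁻¹ := by
  have hd' : (2 : ℝ) < d := by exact_mod_cast hd
  have hexponent : -(d / 2 : ℝ) < -1 := by linarith
  have hpos : (0 : ℝ) < (d - 2 : ℕ) := by exact_mod_cast Nat.sub_pos_of_lt hd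
  rw [← ofReal_integral_eq_lintegral_ofReal (integrableOn_Ioi_rpow_of_lt hexponent one_pos)
      ((ae_restrict_iff' measurableSet_Ioi).2 <| .of_forall fun s hs =>
        Real.rpow_nonneg (zero_le_one.trans hs.le) _),
    integral_Ioi_rpow_of_lt hexponent one_pos, Real.one_rpow, ← ENNReal.ofReal_natCast (d - 2),
    ← ENNReal.ofReal_inv_of_pos hpos, ← ENNReal.ofReal_ofNat 2, ← ENNReal.ofReal_mul zero_le_two,
    Nat.cast_sub hd.le, Nat.cast_ofNat]
  congr 1
  rw [show -(d / 2 : ℝ) + 1 = -((d - 2) / 2) by ring, neg_div_neg_eq, one_div_div, div_eq_mul_inv]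

theorem lintegral_inv_enorm_sq_stdGaussian (hE : 2 < finrank ℝ E) :
    ∫⁻ x, (‖x‖ₑ ^ 2)⁻¹ ∂stdGaussian E = ((finrank ℝ E - 2 : ℕ) : ℝ≥0∞)⁻¹ := by
  have hinv (x : E) : 2 * (‖x‖ₑ ^ 2)⁻¹ =
      ∫⁻ s in Set.Ioi (1 : ℝ), ENNReal.ofReal (Real.exp ((1 - s) / 2 * ‖x‖ ^ 2)) := by
    rw [lintegral_Ioi_exp_mul_eq_inv (sq_nonneg _), ENNReal.ofReal_pow (norm_nonneg x),
      ofReal_norm]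
  have hmgf {s : ℝ} (hs : 0 < s) :
      ∫⁻ x, ENNReal.ofReal (Real.exp ((1 - s) / 2 * ‖x‖ ^ 2)) ∂stdGaussian E =
        ENNReal.ofReal (s ^ (-(finrank ℝ E / 2) : ℝ)) := by
    rw [← integral_exp_mul_norm_sq_stdGaussian hs, ofReal_integral_eq_lintegral_ofReal]
    · refine .of_integral_ne_zero ?_
      rw [integral_exp_mul_norm_sq_stdGaussian hs]
      positivity
    · exact .of_forall fun x => (Real.exp_pos _).le
  rw [← ENNReal.mul_right_inj two_ne_zero ENNReal.ofNat_ne_top,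
    ← lintegral_const_mul _ (by fun_prop)]
  simp only [hinv]
  rw [lintegral_lintegral_swap (Measurable.aemeasurable (by fun_prop)),
    ← lintegral_Ioi_rpow_neg_half hE]
  exact setLIntegral_congr_fun measurableSet_Ioi fun s hs => hmgf (one_pos.trans hs)

lemma lintegral_enorm_inner_sq_stdGaussian (v : E) :
    ∫⁻ x, ‖inner ℝ v x‖ₑ ^ 2 ∂stdGaussian E = ‖v‖ₑ ^ 2 := by
  have hvar := ofReal_variance (IsGaussian.memLp_dual (stdGaussian E) (innerSL ℝ v) 2 (by simp))
  rw [variance_dual_stdGaussian, evariance, integral_strongDual_stdGaussian] at hvar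
  simpa [← ofReal_norm, ENNReal.ofReal_pow] using hvar.symm

lemma map_orthogonalProjectionOnto_stdGaussian (V : Submodule ℝ E) :
    (stdGaussian E).map V.orthogonalProjectionOnto = stdGaussian V := by
  refine Measure.ext_of_charFun ?_
  ext t
  rw [charFun_apply, integral_map (by fun_prop) (by fun_prop), charFun_stdGaussian,
    Submodule.coe_norm, ← charFun_stdGaussian, charFun_apply]
  simp only [Submodule.inner_orthogonalProjectionOnto_eq_of_mem_right]

end GaussianMoments

section Residual

open Module Submodule

variable {ι E : Type*} [NormedAddCommGroup E] [InnerProductSpace ℝ E] [FiniteDimensional ℝ E]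

/-- The component of the vector `a j` orthogonal to all the other vectors of the family `a`; its
norm is the distance from `a j` to their span. -/
noncomputable def residual (a : ι → E) (j : ι) : E :=
  (span ℝ (a '' {j}ᶜ))ᗮ.starProjection (a j)

lemma residual_update (a : ι → E) (j : ι) (y : E) :
    residual (Function.update a j y) j = (span ℝ (a '' {j}ᶜ))ᗮ.starProjection y := by
  have himage : Function.update a j y '' {j}ᶜ = a '' {j}ᶜ :=
    Set.image_congr fun l hl => Function.update_of_ne hl y a
  simp only [residual, himage, Function.update_self]

lemma inner_residual_of_ne (a : ι → E) {j l : ι} (hlj : l ≠ j) : inner ℝ (residual a j) (a l) = 0 :=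
  inner_left_of_mem_orthogonal (subset_span (Set.mem_image_of_mem a hlj))
    (starProjection_apply_mem _ _)

lemma inner_residual_self (a : ι → E) (j : ι) :
    inner ℝ (residual a j) (a j) = ‖residual a j‖ ^ 2 := by
  rw [residual, ← real_inner_self_eq_norm_sq, inner_starProjection_left_eq_right,
    inner_starProjection_left_eq_right, starProjection_eq_self_iff.2 (starProjection_apply_mem _ _)]

/-- The vectors biorthogonal to a linearly independent family `a`, obtained by rescaling the
residuals; `dualVector a j = 0` when the residual vanishes. -/
noncomputable def dualVector (a : ι → E) (j : ι) : E :=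
  (‖residual a j‖ ^ 2)⁻¹ • residual a j

lemma inner_dualVector [DecidableEq ι] {a : ι → E} {j : ι} (hj : residual a j ≠ 0) (l : ι) :
    inner ℝ (dualVector a j) (a l) = if l = j then 1 else 0 := by
  rw [dualVector, real_inner_smul_left]
  split_ifs with hlj
  · rw [hlj, inner_residual_self, inv_mul_cancel₀ (by simpa using hj)]
  · rw [inner_residual_of_ne a hlj, mul_zero]

lemma enorm_dualVector_sq_le (a : ι → E) (j : ι) :
    ‖dualVector a j‖ₑ ^ 2 ≤ (‖residual a j‖ₑ ^ 2)⁻¹ := by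
  by_cases hj : residual a j = 0
  · simp [hj]
  rw [dualVector, enorm_smul, enorm_inv (by simpa using hj), enorm_pow, enorm_norm, mul_pow, sq,
    mul_assoc, ENNReal.inv_mul_cancel (by simpa using hj) (by finiteness), mul_one]

lemma enorm_residual_eq_iInf (a : ι → E) (j : ι) :
    ‖residual a j‖ₑ =
      ⨅ c ∈ Finsupp.supported ℝ ℝ {j}ᶜ, ‖a j - Finsupp.linearCombination ℝ a c‖ₑ := by
  have hproj : residual a j = a j - (span ℝ (a '' {j}ᶜ)).starProjection (a j) :=
    starProjection_orthogonal_val _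
  apply le_antisymm
  · refine le_iInf₂ fun c hc => ?_
    have hmem : Finsupp.linearCombination ℝ a c ∈ span ℝ (a '' {j}ᶜ) :=
      (Finsupp.mem_span_image_iff_linearCombination ℝ).2 ⟨c, hc, rfl⟩
    have hres : residual a j =
        (span ℝ (a '' {j}ᶜ))ᗮ.starProjection (a j - Finsupp.linearCombination ℝ a c) := by
      rw [map_sub, starProjection_orthogonal_val (Finsupp.linearCombination ℝ a c),
        starProjection_eq_self_iff.2 hmem, sub_self, sub_zero, residual]
    rw [hres]
    exact enorm_le_iff_norm_le.2 (norm_starProjection_apply_le _ _)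
  · obtain ⟨c, hc, hac⟩ := (Finsupp.mem_span_image_iff_linearCombination ℝ).1
      (starProjection_apply_mem (span ℝ (a '' {j}ᶜ)) (a j))
    rw [hproj, ← hac]
    exact iInf₂_le c hc

lemma finrank_orthogonal_span_image_compl_add_card [Fintype ι] (a : ι → E) (j : ι) :
    finrank ℝ E + 1 ≤ finrank ℝ (span ℝ (a '' {j}ᶜ))ᗮ + Fintype.card ι := by
  have h := finrank_le_finrank_orthogonal_span_image_add_card (𝕜 := ℝ) a ({j}ᶜ : Finset ι)
  rw [Finset.coe_compl, Finset.coe_singleton, Finset.card_compl, Finset.card_singleton] at h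
  have : 0 < Fintype.card ι := Fintype.card_pos_iff.2 ⟨j⟩
  lia

variable [MeasurableSpace E] [BorelSpace E]

lemma measurable_enorm_residual [Countable ι] (j : ι) :
    Measurable fun a : ι → E => ‖residual a j‖ₑ := by
  simp only [enorm_residual_eq_iInf]
  refine (upperSemicontinuous_biInf fun c _ => Continuous.upperSemicontinuous ?_).measurable
  simp only [Finsupp.linearCombination_apply, Finsupp.sum]
  fun_prop

lemma lintegral_inv_enorm_sq_starProjection_stdGaussian {V : Submodule ℝ E} (hV : 2 < finrank ℝ V) :
    ∫⁻ y, (‖V.starProjection y‖ₑ ^ 2)⁻¹ ∂stdGaussian E = ((finrank ℝ V - 2 : ℕ) : ℝ≥0∞)⁻¹ := by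
  rw [← lintegral_inv_enorm_sq_stdGaussian hV, ← map_orthogonalProjectionOnto_stdGaussian,
    lintegral_map (by fun_prop) (by fun_prop)]
  rfl

variable [Fintype ι]

lemma lintegral_inv_enorm_residual_sq_le (hι : Fintype.card ι + 1 < finrank ℝ E) (j : ι) :
    ∫⁻ a, (‖residual a j‖ₑ ^ 2)⁻¹ ∂Measure.pi (fun _ : ι => stdGaussian E) ≤
      ((finrank ℝ E - Fintype.card ι - 1 : ℕ) : ℝ≥0∞)⁻¹ := by
  have hmeas : Measurable fun a : ι → E => (‖residual a j‖ₑ ^ 2)⁻¹ :=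
    ((measurable_enorm_residual j).pow_const 2).inv
  have hfiber (a : ι → E) :
      ∫⁻ y, (‖residual (Function.update a j y) j‖ₑ ^ 2)⁻¹ ∂stdGaussian E ≤
        ((finrank ℝ E - Fintype.card ι - 1 : ℕ) : ℝ≥0∞)⁻¹ := by
    have hdim := finrank_orthogonal_span_image_compl_add_card a j
    simp only [residual_update]
    rw [lintegral_inv_enorm_sq_starProjection_stdGaussian (by lia)]
    exact ENNReal.inv_le_inv.2 (Nat.cast_le.2 (by lia))
  rw [lintegral_eq_lmarginal_univ 0, lmarginal_erase' _ hmeas (Finset.mem_univ j)]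
  refine (lmarginal_mono (g := fun _ => ((finrank ℝ E - Fintype.card ι - 1 : ℕ) : ℝ≥0∞)⁻¹)
    hfiber _).trans ?_
  simp [lmarginal]

lemma ae_residual_ne_zero (hι : Fintype.card ι + 1 < finrank ℝ E) (j : ι) :
    ∀ᵐ a ∂Measure.pi (fun _ : ι => stdGaussian E), residual a j ≠ 0 := by
  have hfinite := ae_lt_top ((measurable_enorm_residual (E := E) j).pow_const 2).inv
    ((lintegral_inv_enorm_residual_sq_le hι j).trans_lt
      (ENNReal.inv_lt_top.2 (by norm_cast; lia))).ne
  filter_upwards [hfinite] with a ha hzero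
  simp [hzero] at ha

end Residual

section GaussianRows

open WithLp

variable {ι E : Type*} [Fintype ι] [NormedAddCommGroup E] [InnerProductSpace ℝ E]
  [FiniteDimensional ℝ E]

lemma sum_norm_sq_sum_smul (b : OrthonormalBasis ι ℝ (EuclideanSpace ℝ ι)) (x : ι → E) :
    ∑ i, ‖∑ l, b l i • x l‖ ^ 2 = ∑ l, ‖x l‖ ^ 2 := by
  let e := stdOrthonormalBasis ℝ E
  have hcoord (j) : ∑ i, inner ℝ (e j) (∑ l, b l i • x l) ^ 2 = ∑ l, inner ℝ (e j) (x l) ^ 2 := by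
    have h := b.orthonormal.inner_sum (fun l => inner ℝ (e j) (x l)) (fun l => inner ℝ (e j) (x l))
      Finset.univ
    rw [real_inner_self_eq_norm_sq, EuclideanSpace.real_norm_sq_eq] at h
    simpa [inner_sum, inner_smul_right, sq, mul_comm] using h
  simp only [← e.sum_sq_inner_right]
  rw [Finset.sum_comm, Finset.sum_congr rfl fun j _ => hcoord j, Finset.sum_comm]

variable [MeasurableSpace E] [BorelSpace E]

lemma map_toLp_pi_stdGaussian :
    (Measure.pi fun _ : ι => stdGaussian E).map (toLp 2) = stdGaussian (PiLp 2 fun _ : ι => E) := by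
  refine Measure.ext_of_charFun (E := PiLp 2 fun _ : ι => E) ?_
  ext t
  simp_rw [charFun_stdGaussian, charFun_pi, charFun_stdGaussian, ← Complex.exp_sum,
    ← Complex.ofReal_pow, PiLp.norm_sq_eq_of_L2]
  simp [Finset.sum_div, neg_div]

lemma map_sum_smul_pi_stdGaussian (b : OrthonormalBasis ι ℝ (EuclideanSpace ℝ ι)) :
    (Measure.pi fun _ : ι => stdGaussian E).map (fun x i => ∑ l, b l i • x l) =
      Measure.pi fun _ : ι => stdGaussian E := by
  let L : (PiLp 2 fun _ : ι => E) →ₗᵢ[ℝ] (PiLp 2 fun _ : ι => E) :=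
    { toFun := fun x => toLp 2 fun i => ∑ l, b l i • x l
      map_add' := fun x y => by ext i; simp [Finset.sum_add_distrib]
      map_smul' := fun c x => by ext i; simp [Finset.smul_sum, smul_comm c]
      norm_map' := fun x => by
        rw [← sq_eq_sq₀ (norm_nonneg _) (norm_nonneg _)]
        simpa [PiLp.norm_sq_eq_of_L2] using sum_norm_sq_sum_smul b x }
  have hrot : (stdGaussian (PiLp 2 fun _ : ι => E)).map L = stdGaussian (PiLp 2 fun _ => E) :=
    stdGaussian_map (L.toLinearIsometryEquiv rfl)
  calc (Measure.pi fun _ : ι => stdGaussian E).map (fun x i => ∑ l, b l i • x l)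
      = (((Measure.pi fun _ : ι => stdGaussian E).map (toLp 2)).map L).map ofLp := by
        rw [Measure.map_map (by fun_prop) (by fun_prop),
          Measure.map_map (by fun_prop) (by fun_prop)]
        rfl
    _ = ((Measure.pi fun _ : ι => stdGaussian E).map (toLp 2)).map ofLp := by
        rw [map_toLp_pi_stdGaussian, hrot]
    _ = Measure.pi fun _ : ι => stdGaussian E := by
        rw [Measure.map_map (by fun_prop) (by fun_prop)]
        exact Measure.map_id

lemma map_ofLp_stdGaussian (ι : Type*) [Fintype ι] :
    (stdGaussian (EuclideanSpace ℝ ι)).map ofLp = Measure.pi fun _ => gaussianReal 0 1 := by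
  rw [← map_pi_eq_stdGaussian, Measure.map_map (by fun_prop) (by fun_prop)]
  exact Measure.map_id

/-- The rows of the matrix `Uᵀ * a`, where `U` is the orthogonal matrix whose rows are the vectors
of `b` and the rows of `a` are the vectors `a l`. -/
noncomputable def rotateRows {n k : ℕ} (b : OrthonormalBasis (Fin n) ℝ (EuclideanSpace ℝ (Fin n)))
    (a : Fin n → EuclideanSpace ℝ (Fin k)) : Fin n → Fin k → ℝ :=
  fun i => ofLp (∑ l, b l i • a l)

lemma map_rotateRows_pi_stdGaussian {n k : ℕ}
    (b : OrthonormalBasis (Fin n) ℝ (EuclideanSpace ℝ (Fin n))) :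
    (Measure.pi fun _ => stdGaussian (EuclideanSpace ℝ (Fin k))).map (rotateRows b) =
      gaussianEnsemble n k := by
  have hcomp : rotateRows (k := k) b =
      (fun x i => ofLp (x i)) ∘ fun a i => ∑ l, b l i • a l := rfl
  rw [hcomp, ← Measure.map_map (by fun_prop) (by fun_prop), map_sum_smul_pi_stdGaussian,
    Measure.pi_map_pi (fun _ => by fun_prop), gaussianEnsemble]
  simp only [map_ofLp_stdGaussian]

lemma lintegral_gaussianEnsemble_le {n k : ℕ}
    (b : OrthonormalBasis (Fin n) ℝ (EuclideanSpace ℝ (Fin n))) (p : Fin n → Prop)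
    [DecidablePred p] (F : (Fin n → Fin k → ℝ) → ℝ≥0∞) :
    ∫⁻ ω, F ω ∂gaussianEnsemble n k ≤
      ∫⁻ x, ∫⁻ y, F (rotateRows b fun i => if h : p i then x ⟨i, h⟩ else y ⟨i, h⟩)
        ∂Measure.pi (fun _ : {i // ¬ p i} => stdGaussian (EuclideanSpace ℝ (Fin k)))
        ∂Measure.pi (fun _ : {i // p i} => stdGaussian (EuclideanSpace ℝ (Fin k))) := by
  have hsplit := (measurePreserving_piEquivPiSubtypeProd
    (fun _ : Fin n => stdGaussian (EuclideanSpace ℝ (Fin k))) p).symm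
  rw [← map_rotateRows_pi_stdGaussian b, ← hsplit.map_eq]
  exact (lintegral_map_le _ _).trans ((lintegral_map_le _ _).trans (lintegral_prod_le _))

end GaussianRows

section ErrorBound

open WithLp
open scoped Matrix.Norms.Frobenius

lemma norm_sq_sub_sum_smul {ι E : Type*} [NormedAddCommGroup E] [InnerProductSpace ℝ E]
    {v : ι → E} (hv : Orthonormal ℝ v) {q : ι → Prop} [Fintype {j // q j}] {i : ι} (hi : ¬ q i)
    (c : {j // q j} → ℝ) : ‖v i - ∑ j, c j • v j‖ ^ 2 = 1 + ∑ j, c j ^ 2 := by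
  have hcross : inner ℝ (v i) (∑ j : {j // q j}, c j • v j) = 0 := by
    rw [inner_sum]
    refine Finset.sum_eq_zero fun j _ => ?_
    rw [inner_smul_right, hv.inner_eq_zero (fun h => hi (by simpa [h] using j.2)), mul_zero]
  have hsum : ‖∑ j : {j // q j}, c j • v j‖ ^ 2 = ∑ j, c j ^ 2 := by
    rw [← real_inner_self_eq_norm_sq]
    simpa [sq] using (hv.comp _ Subtype.val_injective).inner_sum c c Finset.univ
  rw [norm_sub_sq_real, hcross, hsum, hv.norm_eq_one]
  ring

lemma frobenius_norm_sq_eq_sum_norm_row_sq {m n : ℕ} (M : Matrix (Fin m) (Fin n) ℝ) :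
    ‖M‖ ^ 2 = ∑ i, ‖toLp 2 (M i)‖ ^ 2 := by
  rw [frobenius_norm_def, ← Real.sqrt_eq_rpow, Real.sq_sqrt (by positivity)]
  simp [EuclideanSpace.norm_sq_eq]

lemma sum_apply_mul_apply {n : ℕ} (b : OrthonormalBasis (Fin n) ℝ (EuclideanSpace ℝ (Fin n)))
    (i j : Fin n) : ∑ x, b i x * b j x = if i = j then 1 else 0 := by
  rw [← orthonormal_iff_ite.1 b.orthonormal i j]
  simp [PiLp.inner_apply, mul_comm]

variable {k n r : ℕ} {A : Matrix (Fin n) (Fin n) ℝ}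
  {b : OrthonormalBasis (Fin n) ℝ (EuclideanSpace ℝ (Fin n))}

/-- The factor `S = diag(√σ) * U` of `A = Sᵀ * S = Uᵀ * diag(σ) * U`, where the rows of `U` are the
vectors of an eigenbasis `b` of `A` and `σ` lists the singular values of `A`. -/
noncomputable def spectralFactor (A : Matrix (Fin n) (Fin n) ℝ)
    (b : OrthonormalBasis (Fin n) ℝ (EuclideanSpace ℝ (Fin n))) : Matrix (Fin n) (Fin n) ℝ :=
  Matrix.of fun i => ofLp (√(sval A i) • b i)

lemma conjTranspose_spectralFactor_mul_self
    (hb : ∀ i, toEuclideanLin A (b i) = sval A i • b i) :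
    (spectralFactor A b)ᴴ * spectralFactor A b = A := by
  apply toEuclideanLin.injective
  refine b.toBasis.ext fun j => ?_
  rw [b.coe_toBasis, hb]
  ext x
  simp only [toLpLin_apply, mulVec, dotProduct, mul_apply, Finset.sum_mul]
  rw [Finset.sum_comm]
  calc ∑ i : Fin n, ∑ y, (spectralFactor A b)ᴴ x i * spectralFactor A b i y * b j y
      = ∑ i : Fin n, sval A i * b i x * ∑ y, b i y * b j y := by
        refine Finset.sum_congr rfl fun i _ => ?_
        rw [Finset.mul_sum]
        refine Finset.sum_congr rfl fun y _ => ?_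
        have hsq := Real.mul_self_sqrt (sval_nonneg A i)
        simp only [spectralFactor, conjTranspose_apply, of_apply, ofLp_smul, Pi.smul_apply,
          smul_eq_mul, star_trivial]
        linear_combination b i x * b i y * b j y * hsq
    _ = (sval A j • b j) x := by simp [sum_apply_mul_apply]

lemma spectralFactor_mul_rotateRows_apply (a : Fin n → EuclideanSpace ℝ (Fin k)) (i : Fin n)
    (x : Fin k) :
    (spectralFactor A b * Matrix.of (rotateRows b a)) i x = √(sval A i) * a i x := by
  calc (spectralFactor A b * Matrix.of (rotateRows b a)) i x
      = ∑ l, √(sval A i) * (∑ y, b i y * b l y) * a l x := by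
        simp only [mul_apply, spectralFactor, rotateRows, of_apply, ofLp_smul, ofLp_sum,
          Pi.smul_apply, Finset.sum_apply, smul_eq_mul, Finset.mul_sum, Finset.sum_mul]
        rw [Finset.sum_comm]
        simp only [mul_assoc]
    _ = √(sval A i) * a i x := by simp [sum_apply_mul_apply]

lemma toLp_spectralFactor_sub_mul {κ : Type*} [Fintype κ] (a : Fin n → EuclideanSpace ℝ (Fin k))
    (g : κ → EuclideanSpace ℝ (Fin k)) (v : κ → EuclideanSpace ℝ (Fin n)) (i : Fin n) :
    toLp 2 ((spectralFactor A b - spectralFactor A b * Matrix.of (rotateRows b a) *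
      (Matrix.of fun x j => g j x) * Matrix.of fun j x => v j x) i) =
      √(sval A i) • (b i - ∑ j, inner ℝ (g j) (a i) • v j) := by
  have hinner (j : κ) : (spectralFactor A b * Matrix.of (rotateRows b a) *
      Matrix.of fun x j => g j x) i j = √(sval A i) * inner ℝ (g j) (a i) := by
    rw [mul_apply]
    simp only [spectralFactor_mul_rotateRows_apply, of_apply, PiLp.inner_apply, Finset.mul_sum,
      mul_assoc, RCLike.inner_apply, conj_trivial]
  ext x
  rw [PiLp.toLp_apply, Matrix.sub_apply, mul_apply]
  simp only [hinner]
  simp [spectralFactor, mul_sub, Finset.mul_sum, mul_assoc]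

theorem schatten_one_sub_truncate_nystrom_rotateRows_le {p : Fin n → Prop} [DecidablePred p]
    (hb : ∀ i, toEuclideanLin A (b i) = sval A i • b i) (hp : Fintype.card {i // p i} ≤ r)
    {a : Fin n → EuclideanSpace ℝ (Fin k)} {g : {i // p i} → EuclideanSpace ℝ (Fin k)}
    (hg : ∀ j l : {i // p i}, inner ℝ (g j) (a l) = if l = j then 1 else 0) :
    schatten 1 (A - truncate (nystrom A (Matrix.of (rotateRows b a))) r) ≤
      ∑ i : {i // ¬ p i}, sval A i * (1 + ∑ j, inner ℝ (g j) (a i) ^ 2) := by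
  let S := spectralFactor A b
  let Ω := Matrix.of (rotateRows b a)
  let G : Matrix (Fin k) {i // p i} ℝ := Matrix.of fun x j => g j x
  let V : Matrix {i // p i} (Fin n) ℝ := Matrix.of fun j x => b j x
  have hrank : (G * V).rank ≤ r :=
    (rank_mul_le_left G V).trans ((rank_le_card_width G).trans hp)
  have hrow (i : Fin n) : ‖toLp 2 ((S - S * Ω * (G * V)) i)‖ ^ 2 =
      sval A i * ‖b i - ∑ j, inner ℝ (g j) (a i) • b j‖ ^ 2 := by
    rw [← Matrix.mul_assoc, toLp_spectralFactor_sub_mul a g (fun j => b j) i, norm_smul, mul_pow,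
      Real.norm_eq_abs, sq_abs, Real.sq_sqrt (sval_nonneg A i)]
  calc schatten 1 (A - truncate (nystrom A Ω) r)
      = schatten 1 (Sᴴ * S - truncate (nystrom (Sᴴ * S) Ω) r) := by
        rw [conjTranspose_spectralFactor_mul_self hb]
    _ ≤ ‖S - S * Ω * (G * V)‖ ^ 2 := schatten_one_sub_truncate_nystrom_le S Ω hrank
    _ = ∑ i : Fin n, sval A i * ‖b i - ∑ j, inner ℝ (g j) (a i) • b j‖ ^ 2 := by
        simp only [frobenius_norm_sq_eq_sum_norm_row_sq, hrow]
    _ = ∑ i : {i // ¬ p i}, sval A i * ‖b i - ∑ j, inner ℝ (g j) (a i) • b j‖ ^ 2 := by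
        rw [← Fintype.sum_subtype_add_sum_subtype p, add_eq_right]
        refine Finset.sum_eq_zero fun i _ => ?_
        simp [hg]
    _ = ∑ i : {i // ¬ p i}, sval A i * (1 + ∑ j, inner ℝ (g j) (a i) ^ 2) := by
        refine Finset.sum_congr rfl fun i _ => ?_
        rw [norm_sq_sub_sum_smul b.orthonormal i.2]

end ErrorBound

section ExpectedError

lemma lintegral_sum_mul_one_add_sum_enorm_inner_sq {ι κ E : Type*} [Fintype ι] [Fintype κ]
    [NormedAddCommGroup E] [InnerProductSpace ℝ E] [FiniteDimensional ℝ E] [MeasurableSpace E]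
    [BorelSpace E] (c : ι → ℝ≥0∞) (g : κ → E) :
    ∫⁻ y, ∑ i, c i * (1 + ∑ j, ‖inner ℝ (g j) (y i)‖ₑ ^ 2)
      ∂Measure.pi (fun _ : ι => stdGaussian E) = (∑ i, c i) * (1 + ∑ j, ‖g j‖ₑ ^ 2) := by
  have hrow (i : ι) : ∫⁻ y, 1 + ∑ j, ‖inner ℝ (g j) (y i)‖ₑ ^ 2
      ∂Measure.pi (fun _ : ι => stdGaussian E) = 1 + ∑ j, ‖g j‖ₑ ^ 2 := by
    rw [(measurePreserving_eval (fun _ : ι => stdGaussian E) i).lintegral_comp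
      (f := fun z => 1 + ∑ j, ‖inner ℝ (g j) z‖ₑ ^ 2) (by fun_prop),
      lintegral_add_left (by fun_prop), lintegral_finsetSum _ (by fun_prop)]
    simp [lintegral_enorm_inner_sq_stdGaussian]
  rw [lintegral_finsetSum _ (by fun_prop), Finset.sum_mul]
  refine Finset.sum_congr rfl fun i _ => ?_
  rw [lintegral_const_mul _ (by fun_prop), hrow]

lemma lintegral_one_add_sum_inv_enorm_residual_sq_le {ι E : Type*} [Fintype ι]
    [NormedAddCommGroup E] [InnerProductSpace ℝ E] [FiniteDimensional ℝ E] [MeasurableSpace E]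
    [BorelSpace E] (hι : Fintype.card ι + 1 < Module.finrank ℝ E) :
    ∫⁻ x, 1 + ∑ j, (‖residual x j‖ₑ ^ 2)⁻¹ ∂Measure.pi (fun _ : ι => stdGaussian E) ≤
      1 + Fintype.card ι * ((Module.finrank ℝ E - Fintype.card ι - 1 : ℕ) : ℝ≥0∞)⁻¹ := by
  have hmeas (j : ι) : Measurable fun x : ι → E => (‖residual x j‖ₑ ^ 2)⁻¹ :=
    ((measurable_enorm_residual j).pow_const 2).inv
  rw [lintegral_add_left measurable_const, lintegral_finsetSum _ fun j _ => hmeas j]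
  gcongr
  · simp
  · exact (Finset.sum_le_sum fun j _ => lintegral_inv_enorm_residual_sq_le hι j).trans_eq
      (by simp)

variable {n k r : ℕ} {A : Matrix (Fin n) (Fin n) ℝ}
  {b : OrthonormalBasis (Fin n) ℝ (EuclideanSpace ℝ (Fin n))} {p : Fin n → Prop} [DecidablePred p]

lemma ofReal_schatten_one_sub_truncate_nystrom_rotateRows_le
    (hb : ∀ i, toEuclideanLin A (b i) = sval A i • b i) (hp : Fintype.card {i // p i} ≤ r)
    {a : Fin n → EuclideanSpace ℝ (Fin k)} (ha : ∀ j, residual (fun l : {i // p i} => a l) j ≠ 0) :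
    ENNReal.ofReal (schatten 1 (A - truncate (nystrom A (Matrix.of (rotateRows b a))) r)) ≤
      ∑ i : {i // ¬ p i}, ENNReal.ofReal (sval A i) *
        (1 + ∑ j, ‖inner ℝ (dualVector (fun l : {i // p i} => a l) j) (a i)‖ₑ ^ 2) := by
  refine (ENNReal.ofReal_le_ofReal (schatten_one_sub_truncate_nystrom_rotateRows_le hb hp
    fun j l => inner_dualVector (ha j) l)).trans_eq ?_
  have hsq (i : Fin n) :
      0 ≤ ∑ j, inner ℝ (dualVector (fun l : {i // p i} => a l) j) (a i) ^ 2 :=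
    Finset.sum_nonneg fun j _ => sq_nonneg _
  rw [ENNReal.ofReal_sum_of_nonneg fun (i : {i // ¬ p i}) _ =>
    mul_nonneg (sval_nonneg A i) (add_nonneg zero_le_one (hsq i))]
  refine Finset.sum_congr rfl fun i _ => ?_
  rw [ENNReal.ofReal_mul (sval_nonneg A i), ENNReal.ofReal_add zero_le_one (hsq i),
    ENNReal.ofReal_one, ENNReal.ofReal_sum_of_nonneg fun j _ => sq_nonneg _]
  simp only [← enorm_pow, Real.enorm_of_nonneg (sq_nonneg _)]

lemma lintegral_schatten_one_sub_truncate_nystrom_fiber_le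
    (hb : ∀ i, toEuclideanLin A (b i) = sval A i • b i) (hp : Fintype.card {i // p i} ≤ r)
    {x : {i // p i} → EuclideanSpace ℝ (Fin k)} (hx : ∀ j, residual x j ≠ 0) :
    ∫⁻ y, ENNReal.ofReal (schatten 1 (A - truncate (nystrom A (Matrix.of (rotateRows b
        fun i => if h : p i then x ⟨i, h⟩ else y ⟨i, h⟩))) r))
        ∂Measure.pi (fun _ : {i // ¬ p i} => stdGaussian (EuclideanSpace ℝ (Fin k))) ≤
      ENNReal.ofReal (∑ i : {i // ¬ p i}, sval A i) * (1 + ∑ j, (‖residual x j‖ₑ ^ 2)⁻¹) := by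
  have hpoint (y : {i // ¬ p i} → EuclideanSpace ℝ (Fin k)) :
      ENNReal.ofReal (schatten 1 (A - truncate (nystrom A (Matrix.of (rotateRows b
        fun i => if h : p i then x ⟨i, h⟩ else y ⟨i, h⟩))) r)) ≤
      ∑ i : {i // ¬ p i}, ENNReal.ofReal (sval A i) *
        (1 + ∑ j, ‖inner ℝ (dualVector x j) (y i)‖ₑ ^ 2) := by
    have hhead : (fun l : {i // p i} => if h : p l then x ⟨l, h⟩ else y ⟨l, h⟩) = x :=
      funext fun l => dif_pos l.2
    have htail (i : {i // ¬ p i}) : (if h : p i then x ⟨i, h⟩ else y ⟨i, h⟩) = y i := dif_neg i.2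
    have h := ofReal_schatten_one_sub_truncate_nystrom_rotateRows_le (b := b) hb hp
      (a := fun i => if h : p i then x ⟨i, h⟩ else y ⟨i, h⟩) (by rwa [hhead])
    simpa only [hhead, htail] using h
  calc _ ≤ ∫⁻ y, ∑ i : {i // ¬ p i}, ENNReal.ofReal (sval A i) *
          (1 + ∑ j, ‖inner ℝ (dualVector x j) (y i)‖ₑ ^ 2)
          ∂Measure.pi (fun _ => stdGaussian (EuclideanSpace ℝ (Fin k))) := lintegral_mono hpoint
    _ = ENNReal.ofReal (∑ i : {i // ¬ p i}, sval A i) * (1 + ∑ j, ‖dualVector x j‖ₑ ^ 2) := by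
        rw [lintegral_sum_mul_one_add_sum_enorm_inner_sq,
          ENNReal.ofReal_sum_of_nonneg fun (i : {i // ¬ p i}) _ => sval_nonneg A i]
    _ ≤ _ := by
        gcongr with j
        exact enorm_dualVector_sq_le x j

theorem lintegral_schatten_one_sub_truncate_nystrom_le (hA : A.PosSemidef) (hk : r + 1 < k) :
    ∫⁻ ω, ENNReal.ofReal (schatten 1 (A - truncate (nystrom A (Matrix.of ω)) r))
        ∂gaussianEnsemble n k ≤
      ENNReal.ofReal (tailNorm 1 A r) * (1 + r * ((k - r - 1 : ℕ) : ℝ≥0∞)⁻¹) := by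
  obtain ⟨b, hb⟩ := exists_orthonormalBasis_apply_of_posSemidef hA
  let p : Fin n → Prop := fun i => (i : ℕ) < r
  let E := EuclideanSpace ℝ (Fin k)
  have hp : Fintype.card {i // p i} ≤ r := by
    rw [Fintype.card_subtype]
    exact (Finset.card_le_card_of_injOn Fin.val (by simp [p, Set.MapsTo])
      Fin.val_injective.injOn).trans_eq (Finset.card_range r)
  have hdim : Fintype.card {i // p i} + 1 < Module.finrank ℝ E := by
    rw [finrank_euclideanSpace_fin]
    lia
  let F : (Fin n → Fin k → ℝ) → ℝ≥0∞ := fun ω =>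
    ENNReal.ofReal (schatten 1 (A - truncate (nystrom A (Matrix.of ω)) r))
  have hfiber : ∀ᵐ x ∂Measure.pi fun _ : {i // p i} => stdGaussian E,
      ∫⁻ y, F (rotateRows b fun i => if h : p i then x ⟨i, h⟩ else y ⟨i, h⟩)
        ∂Measure.pi (fun _ : {i // ¬ p i} => stdGaussian E) ≤
      ENNReal.ofReal (tailNorm 1 A r) * (1 + ∑ j, (‖residual x j‖ₑ ^ 2)⁻¹) := by
    filter_upwards [ae_all_iff.2 (ae_residual_ne_zero hdim)] with x hx
    rw [tailNorm_one]
    exact lintegral_schatten_one_sub_truncate_nystrom_fiber_le hb hp hx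
  calc ∫⁻ ω, F ω ∂gaussianEnsemble n k
      ≤ ∫⁻ x, ∫⁻ y, F (rotateRows b fun i => if h : p i then x ⟨i, h⟩ else y ⟨i, h⟩)
          ∂Measure.pi (fun _ : {i // ¬ p i} => stdGaussian E)
          ∂Measure.pi (fun _ : {i // p i} => stdGaussian E) := lintegral_gaussianEnsemble_le b p F
    _ ≤ ∫⁻ x, ENNReal.ofReal (tailNorm 1 A r) * (1 + ∑ j, (‖residual x j‖ₑ ^ 2)⁻¹)
          ∂Measure.pi (fun _ : {i // p i} => stdGaussian E) := lintegral_mono_ae hfiber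
    _ ≤ ENNReal.ofReal (tailNorm 1 A r) * (1 + Fintype.card {i // p i} *
          ((Module.finrank ℝ E - Fintype.card {i // p i} - 1 : ℕ) : ℝ≥0∞)⁻¹) := by
        rw [lintegral_const_mul' _ _ ENNReal.ofReal_ne_top]
        gcongr
        exact lintegral_one_add_sum_inv_enorm_residual_sq_le hdim
    _ ≤ ENNReal.ofReal (tailNorm 1 A r) * (1 + r * ((k - r - 1 : ℕ) : ℝ≥0∞)⁻¹) := by
        rw [finrank_euclideanSpace_fin]
        gcongr

end ExpectedError

instance isProbabilityMeasure_gaussianEnsemble (n k : ℕ) :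
    IsProbabilityMeasure (gaussianEnsemble n k) := by
  unfold gaussianEnsemble
  infer_instance

lemma integrable_schatten_one_sub_truncate_nystrom {n k : ℕ} {A : Matrix (Fin n) (Fin n) ℝ}
    (hA : A.PosSemidef) (r : ℕ) :
    Integrable (fun ω => schatten 1 (A - truncate (nystrom A (Matrix.of ω)) r))
      (gaussianEnsemble n k) := by
  have husc : UpperSemicontinuous fun ω : Fin n → Fin k → ℝ =>
      schatten 1 (A - truncate (nystrom A (Matrix.of ω)) r) :=
    upperSemicontinuous_schatten_one_sub_truncate_nystrom hA r
  refine .of_bound husc.measurable.aestronglyMeasurable (schatten 1 A) (.of_forall fun ω => ?_)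
  rw [Real.norm_of_nonneg (schatten_nonneg _ _)]
  exact schatten_one_sub_truncate_nystrom_le_schatten_one hA _ r

theorem stmt2_general {n k r : ℕ} (A : Matrix (Fin n) (Fin n) ℝ) (hA : A.PosSemidef)
    (hk : r + 1 < k) :
    Integrable (fun ω => schatten 1 (A - truncate (nystrom A (Matrix.of ω)) r))
        (gaussianEnsemble n k) ∧
      ∫ ω, schatten 1 (A - truncate (nystrom A (Matrix.of ω)) r) ∂gaussianEnsemble n k ≤
        (1 + r / ((k : ℝ) - r - 1)) * schatten 1 (A - truncate A r) := by
  have hint := integrable_schatten_one_sub_truncate_nystrom (k := k) hA r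
  have hcast : ((k - r - 1 : ℕ) : ℝ) = (k : ℝ) - r - 1 := by
    rw [Nat.sub_sub, Nat.cast_sub hk.le]
    push_cast
    ring
  have hgap : 0 < ((k - r - 1 : ℕ) : ℝ) := by
    rw [Nat.cast_pos]
    lia
  rw [← hcast]
  have htail : 0 ≤ tailNorm 1 A r := by
    rw [tailNorm_one]
    exact Finset.sum_nonneg fun i _ => sval_nonneg A i
  refine ⟨hint, ?_⟩
  calc ∫ ω, schatten 1 (A - truncate (nystrom A (Matrix.of ω)) r) ∂gaussianEnsemble n k
      ≤ (1 + r / ((k - r - 1 : ℕ) : ℝ)) * tailNorm 1 A r := by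
        rw [integral_eq_lintegral_of_nonneg_ae (.of_forall fun ω => schatten_nonneg _ _) hint.1]
        refine ENNReal.toReal_le_of_le_ofReal (by positivity) ?_
        refine (lintegral_schatten_one_sub_truncate_nystrom_le hA hk).trans_eq ?_
        rw [mul_comm, ENNReal.ofReal_mul (by positivity),
          ENNReal.ofReal_add zero_le_one (by positivity), ENNReal.ofReal_one,
          ENNReal.ofReal_div_of_pos hgap, ENNReal.ofReal_natCast, ENNReal.ofReal_natCast,
          div_eq_mul_inv]
    _ ≤ (1 + r / ((k - r - 1 : ℕ) : ℝ)) * schatten 1 (A - truncate A r) := by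
        gcongr
        exact tailNorm_le_schatten_sub 1 A (isBestRankApprox_truncate A r).1

theorem stmt2 {n k r : ℕ} (A : Matrix (Fin n) (Fin n) ℝ) (hA : A.PosSemidef)
    (hr : 1 ≤ r) (ε : ℝ) (hε : 0 < ε) (hk : (k : ℝ) = (1 + 1 / ε) * r + 1)
    (hrk : r < k) (hkn : k ≤ n) :
    (∫ ω, schatten 1 (A - truncate (nystrom A (Matrix.of ω)) r) ∂ gaussianEnsemble n k)
      ≤ (1 + ε) * schatten 1 (A - truncate A r) := by
  have hr₀ : (0 : ℝ) < r := mod_cast hr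
  have hgap : (k : ℝ) - r - 1 = r / ε := by rw [hk]; ring
  have hk' : r + 1 < k := by
    have : (0 : ℝ) < r / ε := by positivity
    exact_mod_cast (by linarith : (r : ℝ) + 1 < k)
  simpa [hgap, hr₀.ne'] using (stmt2_general A hA hk').2

end PsdSketch
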